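/- Let α > −1 and n ≥ 1, let ψ be analytic on 𝔻, not identically 0, and φ a nonconstant analytic self-map of 𝔻, and suppose D_{ψ,φ,n} is bounded and J-symmetric on A_α². Then φ is univalent (injective) on 𝔻. -/

import Mathlib

open Complex Metric Set

noncomputable section

/-- The open unit disk in `ℂ`. -/
def unitDisk : Set ℂ := Metric.ball 0 1

/-- `wb2 α j` is `β(j)² = j!·Γ(α+2)/Γ(j+α+2)`, the square of the norm of `z^j` in `A_α²`. -/
def wb2 (α : ℝ) (j : ℕ) : ℝ :=
  (j.factorial : ℝ) * Real.Gamma (α + 2) / Real.Gamma ((j : ℝ) + α + 2)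

/-- The `j`-th Taylor coefficient of `f` at `0`. -/
def tcoeff (f : ℂ → ℂ) (j : ℕ) : ℂ := iteratedDeriv j f 0 / (j.factorial : ℂ)

/-- An abstract model of the weighted Bergman space `A_α²`: a complex Hilbert space `H`
whose elements are (identified with) the analytic functions on the unit disk with
square-summable weighted Taylor coefficients, with the weighted `ℓ²` inner product. -/
structure BergmanModel (α : ℝ) (H : Type) [NormedAddCommGroup H]
    [InnerProductSpace ℂ H] where
  emb : H →ₗ[ℂ] (ℂ → ℂ)
  analyticOn : ∀ f : H, AnalyticOnNhd ℂ (emb f) unitDisk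
  summable_norm : ∀ f : H, Summable (fun j => ‖tcoeff (emb f) j‖ ^ 2 * wb2 α j)
  inj : ∀ f g : H, Set.EqOn (emb f) (emb g) unitDisk → f = g
  exists_rep : ∀ F : ℂ → ℂ, AnalyticOnNhd ℂ F unitDisk →
      Summable (fun j => ‖tcoeff F j‖ ^ 2 * wb2 α j) →
      ∃ f : H, Set.EqOn (emb f) F unitDisk
  inner_eq : ∀ f g : H,
      (@inner ℂ H _ f g) =
        ∑' j : ℕ, (starRingEnd ℂ) (tcoeff (emb f) j) * tcoeff (emb g) j * (wb2 α j : ℂ)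

/-- The derivative-evaluation kernel `K_w^{(m)}(z) = m!·z^m / (β(m)²·(1-conj(w)·z)^(m+α+2))`. -/
def kern (α : ℝ) (m : ℕ) (w z : ℂ) : ℂ :=
  (m.factorial : ℂ) * z ^ m /
    ((wb2 α m : ℂ) * (1 - (starRingEnd ℂ) w * z) ^ ((m : ℂ) + (α : ℂ) + 2))

theorem wb2_pos {α : ℝ} (hα : -1 < α) (j : ℕ) : 0 < wb2 α j := by
  unfold wb2
  have h1 : 0 < Real.Gamma (α + 2) := Real.Gamma_pos_of_pos (by linarith)
  have h2 : 0 < Real.Gamma ((j : ℝ) + α + 2) :=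
    Real.Gamma_pos_of_pos (by have : (0 : ℝ) ≤ j := Nat.cast_nonneg j; linarith)
  have h3 : (0 : ℝ) < j.factorial := by exact_mod_cast j.factorial_pos
  positivity

theorem wb2_succ {α : ℝ} (hα : -1 < α) (j : ℕ) :
    wb2 α (j + 1) = wb2 α j * (((j : ℝ) + 1) / ((j : ℝ) + α + 2)) := by
  unfold wb2
  have h0 : (0 : ℝ) < (j : ℝ) + α + 2 := by
    have : (0 : ℝ) ≤ j := Nat.cast_nonneg j
    linarith
  have h2 : 0 < Real.Gamma ((j : ℝ) + α + 2) := Real.Gamma_pos_of_pos h0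
  have h3 : Real.Gamma (((j + 1 : ℕ) : ℝ) + α + 2)
      = ((j : ℝ) + α + 2) * Real.Gamma ((j : ℝ) + α + 2) := by
    rw [← Real.Gamma_add_one h0.ne']
    congr 1
    push_cast
    ring
  rw [h3, Nat.factorial_succ]
  push_cast
  field_simp

/-- kernel coefficients -/
def kc (α : ℝ) (j : ℕ) : ℂ := ((wb2 α j : ℂ))⁻¹

/-- The one-variable kernel function. -/
def Kf (α : ℝ) (x : ℂ) : ℂ := ∑' j : ℕ, kc α j * x ^ j

theorem kc_ratio {α : ℝ} (hα : -1 < α) :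
    Filter.Tendsto (fun n => ‖kc α n‖ / ‖kc α n.succ‖) Filter.atTop (nhds ((1 : NNReal) : ℝ)) := by
  have h : ∀ n : ℕ, ‖kc α n‖ / ‖kc α n.succ‖ = ((n : ℝ) + 1) / ((n : ℝ) + (α + 2)) := by
    intro n
    have h1 := wb2_pos hα n
    have h2 := wb2_pos hα (n + 1)
    have h4 : (0 : ℝ) < (n : ℝ) + α + 2 := by
      have : (0 : ℝ) ≤ n := Nat.cast_nonneg n
      linarith
    have h3 : wb2 α (n + 1) / wb2 α n = ((n : ℝ) + 1) / ((n : ℝ) + (α + 2)) := by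
      rw [wb2_succ hα, ← add_assoc]
      field_simp
    rw [← h3]
    simp only [kc, norm_inv, Complex.norm_real, Real.norm_eq_abs, Nat.succ_eq_add_one,
      abs_of_pos h1, abs_of_pos h2]
    field_simp
  simp_rw [h]
  have h5 := tendsto_add_mul_div_add_mul_atTop_nhds (𝕜 := ℝ) 1 (α + 2) 1 (d := 1) one_ne_zero
  simp only [one_mul, div_one] at h5
  refine (h5.congr fun n => ?_)
  rw [add_comm (1 : ℝ), add_comm (α + 2)]

theorem Kf_fps {α : ℝ} (hα : -1 < α) :
    HasFPowerSeriesOnBall (Kf α) (FormalMultilinearSeries.ofScalars ℂ (kc α)) 0 1 := by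
  have hr : (FormalMultilinearSeries.ofScalars ℂ (kc α)).radius = 1 := by
    simpa using FormalMultilinearSeries.ofScalars_radius_eq_of_tendsto ℂ (kc α)
      (r := 1) one_ne_zero (kc_ratio hα)
  have := (FormalMultilinearSeries.ofScalars ℂ (kc α)).hasFPowerSeriesOnBall (by simp [hr])
  rw [hr] at this
  convert this using 1
  funext x
  have := FormalMultilinearSeries.ofScalars_sum_eq (E := ℂ) (kc α) x
  simp only [smul_eq_mul] at this
  exact this.symm

theorem Kf_analytic {α : ℝ} (hα : -1 < α) : AnalyticOnNhd ℂ (Kf α) unitDisk := by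
  intro z hz
  refine (Kf_fps hα).analyticOnNhd z ?_
  rw [← ENNReal.ofReal_one, Metric.eball_ofReal]
  exact hz

theorem Kf_summable {α : ℝ} (hα : -1 < α) {x : ℂ} (hx : x ∈ unitDisk) :
    Summable (fun j => kc α j * x ^ j) := by
  have hx' : x ∈ Metric.eball (0 : ℂ) 1 := by
    rw [← ENNReal.ofReal_one, Metric.eball_ofReal]
    exact hx
  have := ((Kf_fps hα).hasSum hx').summable
  simpa [FormalMultilinearSeries.ofScalars_apply_eq, mul_comm] using this

theorem Kf_iter {α : ℝ} (hα : -1 < α) (j : ℕ) :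
    iteratedDeriv j (Kf α) 0 = (j.factorial : ℂ) * kc α j := by
  have := (Kf_fps hα).factorial_smul 1 j
  rw [iteratedDeriv_eq_iteratedFDeriv, ← this]
  simp [FormalMultilinearSeries.ofScalars_apply_eq]

theorem kc_ne {α : ℝ} (hα : -1 < α) (j : ℕ) : kc α j ≠ 0 := by
  unfold kc
  have := (wb2_pos hα j).ne'
  simpa using this

theorem iter_comp (f : ℂ → ℂ) (c : ℂ) (n : ℕ) :
    iteratedDeriv n (fun x => f (c * x)) = fun x => c ^ n * iteratedDeriv n f (c * x) := by
  induction n with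
  | zero => simp
  | succ k ih =>
    rw [iteratedDeriv_succ, ih]
    funext x
    have h := deriv_comp_mul_left c (iteratedDeriv k f) x
    rw [deriv_const_mul_field, h, iteratedDeriv_succ, smul_eq_mul]
    ring

theorem disk_iff {z : ℂ} : z ∈ unitDisk ↔ ‖z‖ < 1 := by simp [unitDisk]

theorem disk_mul {a b : ℂ} (ha : a ∈ unitDisk) (hb : b ∈ unitDisk) : a * b ∈ unitDisk := by
  rw [disk_iff] at *
  rw [norm_mul]
  nlinarith [norm_nonneg a, norm_nonneg b]

theorem disk_conj {a : ℂ} (ha : a ∈ unitDisk) : (starRingEnd ℂ) a ∈ unitDisk := by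
  rw [disk_iff] at *
  simpa using ha

theorem disk_zero : (0 : ℂ) ∈ unitDisk := by simp [disk_iff]

theorem disk_open : IsOpen unitDisk := Metric.isOpen_ball

theorem disk_conn : IsPreconnected unitDisk := (convex_ball (0 : ℂ) 1).isPreconnected

theorem scale_analytic {f : ℂ → ℂ} (hf : AnalyticOnNhd ℂ f unitDisk) {c : ℂ}
    (hc : c ∈ unitDisk) : AnalyticOnNhd ℂ (fun x => f (c * x)) unitDisk := by
  refine AnalyticOnNhd.comp (g := f) (f := fun x => c * x) (t := unitDisk) hf ?_ ?_
  · exact analyticOnNhd_const.mul analyticOnNhd_id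
  · intro x hx
    exact disk_mul hc hx

theorem tcoeff_scale {α : ℝ} (hα : -1 < α) (c : ℂ) (j : ℕ) :
    tcoeff (fun x => Kf α (c * x)) j = c ^ j * kc α j := by
  unfold tcoeff
  rw [iter_comp]
  have : (j.factorial : ℂ) ≠ 0 := by exact_mod_cast j.factorial_ne_zero
  simp only [mul_zero]
  rw [Kf_iter hα]
  field_simp

theorem tcoeff_congr {f g : ℂ → ℂ} (h : Set.EqOn f g unitDisk) (j : ℕ) :
    tcoeff f j = tcoeff g j := by
  unfold tcoeff
  rw [Filter.EventuallyEq.iteratedDeriv_eq j (h.eventuallyEq_of_mem (disk_open.mem_nhds disk_zero))]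

theorem exists_kernel {α : ℝ} (hα : -1 < α) {H : Type} [NormedAddCommGroup H]
    [InnerProductSpace ℂ H] (M : BergmanModel α H) {u : ℂ} (hu : u ∈ unitDisk) :
    ∃ f : H, Set.EqOn (M.emb f) (fun x => Kf α (u * x)) unitDisk := by
  refine M.exists_rep _ (scale_analytic (Kf_analytic hα) hu) ?_
  have h := (Kf_summable hα (disk_mul hu hu)).norm
  refine h.congr fun j => ?_
  rw [tcoeff_scale hα]
  have hp := wb2_pos hα j
  simp only [kc, norm_mul, norm_inv, norm_pow, Complex.norm_real, Real.norm_eq_abs, abs_of_pos hp]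
  field_simp
  ring

theorem inner_kernel {α : ℝ} (hα : -1 < α) {H : Type} [NormedAddCommGroup H]
    [InnerProductSpace ℂ H] (M : BergmanModel α H) {u : ℂ} (hu : u ∈ unitDisk) (k : H)
    (hk : Set.EqOn (M.emb k) (fun x => Kf α (u * x)) unitDisk) (f : H) :
    @inner ℂ H _ k f = M.emb f ((starRingEnd ℂ) u) := by
  rw [M.inner_eq]
  have hd : DifferentiableOn ℂ (M.emb f) (Metric.ball 0 1) := (M.analyticOn f).differentiableOn
  have hu' : (starRingEnd ℂ) u ∈ Metric.ball (0 : ℂ) 1 := disk_conj hu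
  rw [← Complex.taylorSeries_eq_on_ball hd hu']
  refine tsum_congr fun j => ?_
  rw [tcoeff_congr hk, tcoeff_scale hα]
  have hp : (wb2 α j : ℂ) ≠ 0 := by exact_mod_cast (wb2_pos hα j).ne'
  simp only [kc, tcoeff, map_mul, map_inv₀, Complex.conj_ofReal, map_pow, sub_zero, smul_eq_mul]
  field_simp

theorem Kf_conj (α : ℝ) (x : ℂ) : (starRingEnd ℂ) (Kf α x) = Kf α ((starRingEnd ℂ) x) := by
  unfold Kf
  rw [Complex.conj_tsum]
  refine tsum_congr fun j => ?_
  simp [kc]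

theorem phi_zero {φ h : ℂ → ℂ} (hφa : AnalyticOnNhd ℂ φ unitDisk)
    (hφm : ∀ z ∈ unitDisk, φ z ∈ unitDisk)
    (hφnc : ∃ z ∈ unitDisk, ∃ w ∈ unitDisk, φ z ≠ φ w)
    (hh : AnalyticOnNhd ℂ h unitDisk) (h0 : ∀ u ∈ unitDisk, h (φ u) = 0) :
    Set.EqOn h 0 unitDisk := by
  rcases hφa.is_constant_or_isOpen disk_conn with ⟨w, hw⟩ | ho
  · obtain ⟨a, ha, b, hb, hab⟩ := hφnc
    exact absurd ((hw a ha).trans (hw b hb).symm) hab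
  · have ho' := ho unitDisk subset_rfl disk_open
    refine hh.eqOn_zero_of_preconnected_of_eventuallyEq_zero disk_conn (hφm 0 disk_zero) ?_
    filter_upwards [ho'.mem_nhds ⟨0, disk_zero, rfl⟩] with v hv
    obtain ⟨u, hu, rfl⟩ := hv
    exact h0 u hu

theorem inj_core {n : ℕ} {L ψ φ : ℂ → ℂ} (hL : AnalyticOnNhd ℂ L unitDisk)
    (hL0 : L 0 ≠ 0) (hL1 : deriv L 0 ≠ 0)
    (hψa : AnalyticOnNhd ℂ ψ unitDisk)
    (hψ0 : ∃ z ∈ unitDisk, ψ z ≠ 0)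
    (hφa : AnalyticOnNhd ℂ φ unitDisk)
    (hφm : ∀ z ∈ unitDisk, φ z ∈ unitDisk)
    (hφnc : ∃ z ∈ unitDisk, ∃ w ∈ unitDisk, φ z ≠ φ w)
    (key : ∀ z ∈ unitDisk, ∀ u ∈ unitDisk,
      ψ z * (u ^ n * L (u * φ z)) = ψ u * (z ^ n * L (z * φ u))) :
    Set.InjOn φ unitDisk := by
  have prod : ∀ f g : ℂ → ℂ, AnalyticOnNhd ℂ f unitDisk → AnalyticOnNhd ℂ g unitDisk →
      (∃ z ∈ unitDisk, f z ≠ 0) → (∀ z ∈ unitDisk, f z * g z = 0) →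
      ∀ z ∈ unitDisk, g z = 0 := by
    intro f g hf hg ⟨z, hz, hfz⟩ h
    rcases hf.eq_zero_or_eq_zero_of_mul_eq_zero hg h disk_conn with h | h
    · exact absurd (h z hz) hfz
    · exact h
  have prod' : ∀ f g : ℂ → ℂ, AnalyticOnNhd ℂ f unitDisk → AnalyticOnNhd ℂ g unitDisk →
      (∃ z ∈ unitDisk, f z ≠ 0) → (∃ z ∈ unitDisk, g z ≠ 0) →
      ∃ z ∈ unitDisk, f z * g z ≠ 0 := by
    intro f g hf hg h1 ⟨z, hz, hgz⟩
    by_contra! h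
    exact hgz (prod f g hf hg h1 h z hz)
  have hLφ : ∀ a ∈ unitDisk, AnalyticOnNhd ℂ (fun u => L (a * φ u)) unitDisk := fun a ha =>
    AnalyticOnNhd.comp (g := fun v => L (a * v)) (t := unitDisk) (scale_analytic hL ha) hφa hφm
  have hpow : AnalyticOnNhd ℂ (fun z : ℂ => z ^ n) unitDisk := analyticOnNhd_id.pow n
  have hpow0 : ∃ z ∈ unitDisk, z ^ n ≠ (0 : ℂ) :=
    ⟨1 / 2, by rw [disk_iff]; norm_num, by simp⟩
  have hψpow := prod' _ _ hψa hpow hψ0 hpow0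
  -- cancelled identity
  have key2 : ∀ u ∈ unitDisk, ∀ v ∈ unitDisk, ∀ z ∈ unitDisk,
      u ^ n * ψ v * L (u * φ z) * L (z * φ v) - v ^ n * ψ u * L (v * φ z) * L (z * φ u) = 0 := by
    intro u hu v hv
    refine prod (fun z => ψ z * z ^ n) _ (hψa.mul hpow) ?_ hψpow ?_
    · have e1 : ∀ a ∈ unitDisk, AnalyticOnNhd ℂ (fun z => L (z * φ a)) unitDisk := by
        intro a ha
        simpa only [mul_comm] using scale_analytic hL (hφm a ha)
      exact ((analyticOnNhd_const.mul (hLφ u hu)).mul (e1 v hv)).sub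
        ((analyticOnNhd_const.mul (hLφ v hv)).mul (e1 u hu))
    · intro z hz
      linear_combination (ψ v * z ^ n * L (z * φ v)) * key z hz u hu
        - (ψ u * z ^ n * L (z * φ u)) * key z hz v hv
  intro z₁ h₁ z₂ h₂ hc
  set c := φ z₁ with hcdef
  have hcD : c ∈ unitDisk := hφm _ h₁
  -- choose the base point
  obtain ⟨v, hv, hne⟩ : ∃ v ∈ unitDisk, (ψ v * v ^ n) * (L (c * v) * L (z₁ * φ v)) ≠ 0 := by
    refine prod' _ _ (hψa.mul hpow) ((scale_analytic hL hcD).mul (hLφ z₁ h₁)) hψpow ?_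
    refine prod' _ _ (scale_analytic hL hcD) (hLφ z₁ h₁) ⟨0, disk_zero, by simpa using hL0⟩ ?_
    by_contra! h
    have := phi_zero hφa hφm hφnc (scale_analytic hL h₁) h disk_zero
    exact hL0 (by simpa using this)
  simp only [ne_eq, mul_eq_zero, not_or] at hne
  obtain ⟨⟨hv1, hv2⟩, hv3, hv4⟩ := hne
  set κ₁ := L (z₁ * φ v)
  set κ₂ := L (z₂ * φ v)
  have hh : Set.EqOn (fun x => κ₁ * L (z₂ * x) - κ₂ * L (z₁ * x)) 0 unitDisk := by
    have han : AnalyticOnNhd ℂ (fun x => κ₁ * L (z₂ * x) - κ₂ * L (z₁ * x)) unitDisk :=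
      (analyticOnNhd_const.mul (scale_analytic hL h₂)).sub
        (analyticOnNhd_const.mul (scale_analytic hL h₁))
    refine phi_zero hφa hφm hφnc han ?_
    refine prod ψ _ hψa (AnalyticOnNhd.comp (t := unitDisk) han hφa hφm) hψ0 ?_
    intro u hu
    have a1 := key2 u hu v hv z₁ h₁
    have a2 := key2 u hu v hv z₂ h₂
    rw [← hcdef, mul_comm v c] at a1
    rw [← hc, mul_comm v c] at a2
    have a3 : (v ^ n * L (c * v)) * (ψ u * (κ₁ * L (z₂ * φ u) - κ₂ * L (z₁ * φ u))) = 0 := by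
      linear_combination κ₂ * a1 - κ₁ * a2
    rcases mul_eq_zero.mp a3 with h | h
    · exact absurd h (mul_ne_zero hv2 hv3)
    · exact h
  have b0 : κ₁ = κ₂ := by
    have := hh disk_zero
    simp only [mul_zero, Pi.zero_apply] at this
    have : (κ₁ - κ₂) * L 0 = 0 := by linear_combination this
    rcases mul_eq_zero.mp this with h | h
    · exact sub_eq_zero.mp h
    · exact absurd h hL0
  have hLd : DifferentiableAt ℂ L 0 := (hL 0 disk_zero).differentiableAt
  have hd : ∀ a : ℂ, HasDerivAt (fun x => L (a * x)) (deriv L 0 * a) 0 := by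
    intro a
    have h1 : HasDerivAt (fun x : ℂ => a * x) a 0 := by
      simpa using (hasDerivAt_id (0 : ℂ)).const_mul a
    have h2 : HasDerivAt L (deriv L 0) (a * 0) := by simpa using hLd.hasDerivAt
    exact h2.comp 0 h1
  have b1 : κ₁ * (deriv L 0 * z₂) - κ₂ * (deriv L 0 * z₁) = 0 := by
    have e1 := ((hd z₂).const_mul κ₁).sub ((hd z₁).const_mul κ₂)
    have e2 : HasDerivAt (fun x => κ₁ * L (z₂ * x) - κ₂ * L (z₁ * x)) 0 0 :=
      (hasDerivAt_const (0 : ℂ) (0 : ℂ)).congr_of_eventuallyEq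
        (hh.eventuallyEq_of_mem (disk_open.mem_nhds disk_zero))
    exact e1.unique e2
  rw [← b0] at b1
  have b2 : (κ₁ * deriv L 0) * (z₁ - z₂) = 0 := by linear_combination -b1
  rcases mul_eq_zero.mp b2 with h | h
  · exact absurd h (mul_ne_zero hv4 hL1)
  · exact sub_eq_zero.mp h

/-- If `D_{ψ,φ,n}` is bounded and `J`-symmetric on `A_α²`, then `φ` is
univalent (injective) on `𝔻`. -/
theorem stmt_5 (α : ℝ) (hα : -1 < α) (n : ℕ) (hn : 1 ≤ n)
    (H : Type) [NormedAddCommGroup H] [InnerProductSpace ℂ H] [CompleteSpace H]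
    (M : BergmanModel α H)
    (ψ : ℂ → ℂ) (hψa : AnalyticOnNhd ℂ ψ unitDisk)
    (hψ0 : ∃ z ∈ unitDisk, ψ z ≠ 0)
    (φ : ℂ → ℂ) (hφa : AnalyticOnNhd ℂ φ unitDisk)
    (hφm : ∀ z ∈ unitDisk, φ z ∈ unitDisk)
    (hφnc : ∃ z ∈ unitDisk, ∃ w ∈ unitDisk, φ z ≠ φ w)
    (T : H →L[ℂ] H)
    (hT : ∀ f : H, ∀ z ∈ unitDisk,
      M.emb (T f) z = ψ z * iteratedDeriv n (M.emb f) (φ z))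
    (Jm : H → H)
    (hJm : ∀ f : H, ∀ z ∈ unitDisk,
      M.emb (Jm f) z = (starRingEnd ℂ) (M.emb f ((starRingEnd ℂ) z)))
    (hsym : ∀ f : H, Jm (ContinuousLinearMap.adjoint T (Jm f)) = T f) :
    Set.InjOn φ unitDisk := by
  choose! k hk using fun u (hu : u ∈ unitDisk) => exists_kernel hα M hu
  have hJk : ∀ u ∈ unitDisk, Jm (k u) = k ((starRingEnd ℂ) u) := by
    intro u hu
    refine M.inj _ _ fun z hz => ?_
    rw [hJm _ z hz, hk u hu (disk_conj hz), hk _ (disk_conj hu) hz]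
    simp [Kf_conj]
  have hTk : ∀ u ∈ unitDisk, ∀ z ∈ unitDisk,
      M.emb (T (k u)) z = ψ z * (u ^ n * iteratedDeriv n (Kf α) (u * φ z)) := by
    intro u hu z hz
    rw [hT _ z hz, Filter.EventuallyEq.iteratedDeriv_eq n
      ((hk u hu).eventuallyEq_of_mem (disk_open.mem_nhds (hφm z hz))), iter_comp]
  refine inj_core (n := n) (L := iteratedDeriv n (Kf α)) ?_ ?_ ?_ hψa hψ0 hφa hφm hφnc ?_
  · rw [iteratedDeriv_eq_iterate]
    exact (Kf_analytic hα).iterated_deriv n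
  · rw [Kf_iter hα]
    exact mul_ne_zero (by exact_mod_cast n.factorial_ne_zero) (kc_ne hα n)
  · rw [← iteratedDeriv_succ, Kf_iter hα]
    exact mul_ne_zero (by exact_mod_cast (n + 1).factorial_ne_zero) (kc_ne hα _)
  · intro z hz u hu
    rw [← hTk u hu z hz, ← hTk z hz u hu, ← hsym (k u), hJm _ z hz, hJk u hu,
      ← inner_kernel hα M hz (k z) (hk z hz), ContinuousLinearMap.adjoint_inner_right,
      inner_conj_symm, inner_kernel hα M (disk_conj hu) _ (hk _ (disk_conj hu)), Complex.conj_conj]
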